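/- Let R be a commutative ring, M an R-module, and V₁ ⊆ V₂ submodules of M that are both direct summands of M. Then the map W ↦ (image of W under the quotient map M → M/V₁) is an inclusion-preserving bijection from the set of submodules W of M with V₁ ⊆ W ⊆ V₂ that are direct summands of M, onto the set of submodules U of M/V₁ contained in the image of V₂ that are direct summands of M/V₁; its inverse sends U to its preimage in M under the quotient map. -/

import Mathlib

/-- A submodule `N` of a module `P` is a direct summand. -/
def IsSummand {R P : Type*} [CommRing R] [AddCommGroup P] [Module R P]
    (N : Submodule R P) : Prop :=
  ∃ N' : Submodule R P, N ⊓ N' = ⊥ ∧ N ⊔ N' = ⊤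

/-! Submodules of `M ⧸ V` form the interval `[V, ⊤]` of the modular lattice of submodules of `M`,
so one has to compare complements in a bounded modular lattice with complements in an interval
`[a, ⊤]`. If `c` is a complement of `w ≥ a`, then `c ⊔ a` is one in `[a, ⊤]`. Conversely, a
complement `c` of `a` cuts a complement `d` of `w` in `[a, ⊤]` down to a complement `c ⊓ d` of `w`
in the whole lattice. -/

section Lattice

variable {α β : Type*} [Lattice α] [BoundedOrder α] [Lattice β] [BoundedOrder β]

theorem isComplemented_orderIso_apply_iff (e : α ≃o β) {x : α} :
    IsComplemented (e x) ↔ IsComplemented x := by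
  simp only [IsComplemented, e.surjective.exists, ← e.isCompl_iff]

variable [IsModularLattice α] {a : α} {w : Set.Ici a}

theorem isComplemented_Ici_of_isComplemented_coe (hw : IsComplemented (w : α)) :
    IsComplemented w := by
  obtain ⟨c, hc⟩ := hw
  have h_inf : (w : α) ⊓ (c ⊔ a) = a := by
    rw [← inf_sup_assoc_of_le c w.2, hc.inf_eq_bot, bot_sup_eq]
  have h_sup : (w : α) ⊔ (c ⊔ a) = ⊤ := by
    rw [← sup_assoc, hc.sup_eq_top, top_sup_eq]
  exact ⟨⟨c ⊔ a, le_sup_right⟩, IsCompl.of_eq (Subtype.ext h_inf) (Subtype.ext h_sup)⟩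

theorem isComplemented_coe_of_isComplemented_Ici (ha : IsComplemented a) (hw : IsComplemented w) :
    IsComplemented (w : α) := by
  obtain ⟨c, hc⟩ := ha
  obtain ⟨d, hd⟩ := hw
  have hwd_inf : (w ⊓ d : α) = a := congrArg Subtype.val hd.inf_eq_bot
  have hwd_sup : (w ⊔ d : α) = ⊤ := congrArg Subtype.val hd.sup_eq_top
  refine ⟨c ⊓ d, IsCompl.of_eq ?_ ?_⟩
  · rw [inf_left_comm, hwd_inf, inf_comm, hc.inf_eq_bot]
  · calc (w : α) ⊔ c ⊓ d = (w : α) ⊔ (a ⊔ c ⊓ d) := by rw [← sup_assoc, sup_eq_left.mpr w.2]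
      _ = (w : α) ⊔ (a ⊔ c) ⊓ d := by rw [sup_inf_assoc_of_le c d.2]
      _ = ⊤ := by rw [hc.sup_eq_top, top_inf_eq, hwd_sup]

theorem isComplemented_coe_Ici_iff (ha : IsComplemented a) :
    IsComplemented (w : α) ↔ IsComplemented w :=
  ⟨isComplemented_Ici_of_isComplemented_coe, isComplemented_coe_of_isComplemented_Ici ha⟩

end Lattice

theorem isComplemented_comap_mkQ_iff {R M : Type*} [Ring R] [AddCommGroup M] [Module R M]
    {V : Submodule R M} (hV : IsComplemented V) {U : Submodule R (M ⧸ V)} :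
    IsComplemented (U.comap V.mkQ) ↔ IsComplemented U :=
  (isComplemented_coe_Ici_iff (w := V.comapMkQRelIso U) hV).trans
    (isComplemented_orderIso_apply_iff V.comapMkQRelIso)

theorem isSummand_iff_isComplemented {R P : Type*} [CommRing R] [AddCommGroup P] [Module R P]
    {N : Submodule R P} : IsSummand N ↔ IsComplemented N := by
  simp only [IsSummand, IsComplemented, isCompl_iff, disjoint_iff, codisjoint_iff]

theorem summand_quotient_bijection_general {R M : Type*} [Ring R] [AddCommGroup M] [Module R M]
    (V₁ V₂ : Submodule R M) (h₁₂ : V₁ ≤ V₂) (h₁ : IsComplemented V₁) :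
    (∀ W : Submodule R M, V₁ ≤ W → W ≤ V₂ → IsComplemented W →
        W.map V₁.mkQ ≤ V₂.map V₁.mkQ ∧ IsComplemented (W.map V₁.mkQ)) ∧
    (∀ W W' : Submodule R M, V₁ ≤ W → W ≤ V₂ → IsComplemented W →
        V₁ ≤ W' → W' ≤ V₂ → IsComplemented W' →
        (W ≤ W' ↔ W.map V₁.mkQ ≤ W'.map V₁.mkQ)) ∧
    (∀ W : Submodule R M, V₁ ≤ W → W ≤ V₂ → IsComplemented W →
        (W.map V₁.mkQ).comap V₁.mkQ = W) ∧
    (∀ U : Submodule R (M ⧸ V₁), U ≤ V₂.map V₁.mkQ → IsComplemented U →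
        V₁ ≤ U.comap V₁.mkQ ∧ U.comap V₁.mkQ ≤ V₂ ∧ IsComplemented (U.comap V₁.mkQ) ∧
        (U.comap V₁.mkQ).map V₁.mkQ = U) := by
  have comap_map {W : Submodule R M} (hW : V₁ ≤ W) : (W.map V₁.mkQ).comap V₁.mkQ = W :=
    Submodule.comap_map_eq_self (V₁.ker_mkQ.trans_le hW)
  refine ⟨fun W hVW hWV hW ↦ ⟨Submodule.map_mono hWV, ?_⟩, fun W W' _ _ _ hVW' _ _ ↦ ?_,
    fun W hVW _ _ ↦ comap_map hVW, fun U hUV hU ↦ ⟨V₁.le_comap_mkQ U, ?_,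
      (isComplemented_comap_mkQ_iff h₁).mpr hU,
      Submodule.map_comap_eq_of_surjective V₁.mkQ_surjective U⟩⟩
  · rwa [← isComplemented_comap_mkQ_iff h₁, comap_map hVW]
  · rw [Submodule.map_le_iff_le_comap, comap_map hVW']
  · exact (Submodule.comap_mono hUV).trans_eq (comap_map h₁₂)

/-- Let `V₁ ⊆ V₂` be submodules of `M` that are direct summands of `M`. Then
`W ↦ W/V₁` (the image of `W` under `M → M/V₁`) is an inclusion-preserving bijection from the
set of direct summands `W` of `M` with `V₁ ⊆ W ⊆ V₂` onto the set of direct summands of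
`M/V₁` contained in the image of `V₂`, with inverse `U ↦` (preimage of `U` in `M`). -/
theorem summand_quotient_bijection {R M : Type*} [CommRing R] [AddCommGroup M] [Module R M]
    (V₁ V₂ : Submodule R M) (h₁₂ : V₁ ≤ V₂) (h₁ : IsSummand V₁) (h₂ : IsSummand V₂) :
    (∀ W : Submodule R M, V₁ ≤ W → W ≤ V₂ → IsSummand W →
        W.map V₁.mkQ ≤ V₂.map V₁.mkQ ∧ IsSummand (W.map V₁.mkQ)) ∧
    (∀ W W' : Submodule R M, V₁ ≤ W → W ≤ V₂ → IsSummand W →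
        V₁ ≤ W' → W' ≤ V₂ → IsSummand W' →
        (W ≤ W' ↔ W.map V₁.mkQ ≤ W'.map V₁.mkQ)) ∧
    (∀ W : Submodule R M, V₁ ≤ W → W ≤ V₂ → IsSummand W →
        (W.map V₁.mkQ).comap V₁.mkQ = W) ∧
    (∀ U : Submodule R (M ⧸ V₁), U ≤ V₂.map V₁.mkQ → IsSummand U →
        V₁ ≤ U.comap V₁.mkQ ∧ U.comap V₁.mkQ ≤ V₂ ∧ IsSummand (U.comap V₁.mkQ) ∧
        (U.comap V₁.mkQ).map V₁.mkQ = U) := by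
  simp only [isSummand_iff_isComplemented] at h₁ ⊢
  exact summand_quotient_bijection_general V₁ V₂ h₁₂ h₁
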